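/- arXiv:1607.01925 — 3 statements merged into one kernel-verified Lean document; each statement's English description precedes it below -/
import Mathlib

section
/- Let β>0 and let p = (1/3,1/3). If 0<β<2, then p is a local minimum of F_β, and if β>2, then p is a local maximum of F_β. -/
/-!
Put `u_i = 3 x_i` and `t_i = u_i - 1`, so that `∑ t_i = 0` and `p` corresponds to `t = 0`.
Since `v_0 + v_1 + v_2 = 0` and the `v_k` are the cube roots of unity, `|ψ|² = (1/6) ∑ t_i²`
(`psi_sq`). The expansion `(1 + t) log (1 + t) = t + t²/2 + O(t³)` (`mul_log_approx`), summed over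
`i`, loses its linear term and gives `S = (1/6) ∑ t_i² + O(max |t_i|) ∑ t_i²` (`potS_approx`).
Hence `F_β = ((2 - β)/(12 β) + o(1)) ∑ t_i²` near `p`, whose sign is that of `2 - β`.
-/

/-- The spin value `v_k = (cos(2πk/3), sin(2πk/3))`. -/
noncomputable def potV (k : ℕ) : ℝ × ℝ :=
  (Real.cos (2 * Real.pi * k / 3), Real.sin (2 * Real.pi * k / 3))

/-- `ψ(x) = (2x₁+x₂−1)v₁ + (x₁+2x₂−1)v₂`. -/
noncomputable def potPsi (x : ℝ × ℝ) : ℝ × ℝ :=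
  ((2 * x.1 + x.2 - 1) * (potV 1).1 + (x.1 + 2 * x.2 - 1) * (potV 2).1,
   (2 * x.1 + x.2 - 1) * (potV 1).2 + (x.1 + 2 * x.2 - 1) * (potV 2).2)

/-- The entropy `S(x) = Σᵢ xᵢ log(3xᵢ)` with `x₀ = 1 − x₁ − x₂`
(the convention `t log t = 0` at `t = 0` holds since `Real.log 0 = 0`). -/
noncomputable def potS (x : ℝ × ℝ) : ℝ :=
  (1 - x.1 - x.2) * Real.log (3 * (1 - x.1 - x.2))
    + x.1 * Real.log (3 * x.1) + x.2 * Real.log (3 * x.2)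

/-- The mean-field Potts potential `F_β(x) = −(1/2)|ψ(x)|² + (1/β)S(x)`. -/
noncomputable def potF (β : ℝ) (x : ℝ × ℝ) : ℝ :=
  - (1 / 2) * ((potPsi x).1 ^ 2 + (potPsi x).2 ^ 2) + (1 / β) * potS x

/-- The open two-dimensional simplex `Ξ°`. -/
def simplexInt : Set (ℝ × ℝ) := {x | 0 < x.1 ∧ 0 < x.2 ∧ x.1 + x.2 < 1}

/-- Second-order Taylor expansion of `(1 + t) log (1 + t)` at `0`, with explicit cubic remainder. -/
lemma mul_log_approx {t : ℝ} (ht : |t| ≤ 1 / 2) :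
    |(1 + t) * Real.log (1 + t) - (t + t ^ 2 / 2)| ≤ 4 * |t| * t ^ 2 := by
  have h := Real.abs_log_sub_add_sum_range_le (x := -t) (by rw [abs_neg]; linarith) 2
  simp only [Finset.sum_range_succ, Finset.sum_range_zero, abs_neg] at h
  norm_num at h
  have h1 : |t| ^ 3 / (1 - |t|) ≤ 2 * |t| ^ 3 := by
    rw [div_le_iff₀ (by linarith)]
    nlinarith [pow_nonneg (abs_nonneg t) 3]
  set e := -t + t ^ 2 / 2 + Real.log (1 + t) with he
  have hsplit : (1 + t) * Real.log (1 + t) - (t + t ^ 2 / 2) = (1 + t) * e + -(t ^ 3 / 2) := by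
    rw [he]; ring
  have h2 : |1 + t| ≤ 3 / 2 := by
    rw [abs_le] at ht ⊢
    constructor <;> linarith
  have h3 : |t ^ 3 / 2| = |t| ^ 3 / 2 := by
    rw [abs_div, abs_pow]; norm_num
  have h4 : |1 + t| * |e| ≤ 3 / 2 * (2 * |t| ^ 3) :=
    mul_le_mul h2 (h.trans h1) (abs_nonneg _) (by norm_num)
  have h5 : 4 * |t| * t ^ 2 = 4 * |t| ^ 3 := by
    rw [← sq_abs t]; ring
  rw [hsplit, h5]
  refine (abs_add_le _ _).trans ?_
  rw [abs_mul, abs_neg, h3]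
  linarith [pow_nonneg (abs_nonneg t) 3]

/-- The sum `∑ (3 x_i - 1)²` over `i = 0, 1, 2`. -/
def devSq (x : ℝ × ℝ) : ℝ :=
  (3 * (1 - x.1 - x.2) - 1) ^ 2 + (3 * x.1 - 1) ^ 2 + (3 * x.2 - 1) ^ 2

lemma psi_sq (x : ℝ × ℝ) : (potPsi x).1 ^ 2 + (potPsi x).2 ^ 2 = devSq x / 6 := by
  have e1 : 2 * Real.pi * ((1 : ℕ) : ℝ) / 3 = Real.pi - Real.pi / 3 := by push_cast; ring
  have e2 : 2 * Real.pi * ((2 : ℕ) : ℝ) / 3 = Real.pi / 3 + Real.pi := by push_cast; ring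
  have h3 : Real.sqrt 3 ^ 2 = 3 := Real.sq_sqrt (by norm_num)
  simp only [potPsi, potV, devSq, e1, e2, Real.cos_pi_sub, Real.sin_pi_sub, Real.cos_add_pi,
    Real.sin_add_pi, Real.cos_pi_div_three, Real.sin_pi_div_three]
  linear_combination ((x.1 - x.2) ^ 2 / 4) * h3

lemma potS_approx {δ : ℝ} (hδ : δ ≤ 1 / 2) {x : ℝ × ℝ} (h0 : |3 * (1 - x.1 - x.2) - 1| ≤ δ)
    (h1 : |3 * x.1 - 1| ≤ δ) (h2 : |3 * x.2 - 1| ≤ δ) :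
    |potS x - devSq x / 6| ≤ 4 * δ / 3 * devSq x := by
  have key : ∀ u : ℝ, |3 * u - 1| ≤ δ →
      |3 * u * Real.log (3 * u) - ((3 * u - 1) + (3 * u - 1) ^ 2 / 2)|
        ≤ 4 * δ * (3 * u - 1) ^ 2 := by
    intro u hu
    have h := mul_log_approx (hu.trans hδ)
    rw [add_sub_cancel] at h
    exact h.trans (by gcongr)
  have k0 := abs_le.1 (key _ h0)
  have k1 := abs_le.1 (key _ h1)
  have k2 := abs_le.1 (key _ h2)
  unfold potS devSq
  rw [abs_le]
  constructor <;> linarith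

lemma potF_eq (β : ℝ) (x : ℝ × ℝ) : potF β x = -(devSq x / 12) + 1 / β * potS x := by
  rw [potF, psi_sq]; ring

lemma potF_center (β : ℝ) : potF β (1 / 3, 1 / 3) = 0 := by
  rw [potF_eq]; norm_num [devSq, potS]

lemma eventually_potS_approx {δ : ℝ} (hδ0 : 0 < δ) (hδ : δ ≤ 1 / 2) :
    ∀ᶠ x in nhds ((1 / 3, 1 / 3) : ℝ × ℝ), |potS x - devSq x / 6| ≤ 4 * δ / 3 * devSq x := by
  have near : ∀ f : ℝ × ℝ → ℝ, Continuous f → f (1 / 3, 1 / 3) = 0 →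
      ∀ᶠ x in nhds ((1 / 3, 1 / 3) : ℝ × ℝ), |f x| ≤ δ := by
    intro f hf h0
    have hlt : |f (1 / 3, 1 / 3)| < δ := by rw [h0, abs_zero]; exact hδ0
    exact (hf.abs.continuousAt.eventually_lt_const hlt).mono fun _ => le_of_lt
  filter_upwards [near (fun x => 3 * (1 - x.1 - x.2) - 1) (by fun_prop) (by norm_num),
    near (fun x => 3 * x.1 - 1) (by fun_prop) (by norm_num),
    near (fun x => 3 * x.2 - 1) (by fun_prop) (by norm_num)] with x h0 h1 h2
  exact potS_approx hδ h0 h1 h2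

/-- For `0 < β < 2` the point `p = (1/3,1/3)` is a local minimum of `F_β`,
and for `β > 2` it is a local maximum of `F_β`. -/
theorem potts_p_local_min_max (β : ℝ) (hβ : 0 < β) :
    (β < 2 → IsLocalMin (potF β) (1 / 3, 1 / 3)) ∧
    (2 < β → IsLocalMax (potF β) (1 / 3, 1 / 3)) := by
  have hmul : ∀ x, potF β x = (potS x - β * devSq x / 12) / β := by
    intro x
    rw [potF_eq]; field_simp; ring
  have hD : ∀ x, 0 ≤ devSq x := fun x => by unfold devSq; positivity
  -- The choice `δ = |2 - β| / 16` makes the relative error `4 δ / 3` equal to `|2 - β| / 12`.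
  constructor
  · intro h
    filter_upwards [eventually_potS_approx (δ := (2 - β) / 16) (by linarith) (by linarith)]
      with x hx
    rw [potF_center, hmul]
    apply div_nonneg _ hβ.le
    linarith [(abs_le.1 hx).1]
  · intro h
    -- The minimum with `1 / 2` keeps `δ` within the range of the entropy estimate for large `β`.
    have hδ : 0 < min ((β - 2) / 16) (1 / 2) := lt_min (by linarith) (by norm_num)
    filter_upwards [eventually_potS_approx hδ (min_le_right _ _)] with x hx
    rw [potF_center, hmul]
    apply div_nonpos_of_nonpos_of_nonneg _ hβ.le
    have hm := mul_le_mul_of_nonneg_right (min_le_left ((β - 2) / 16) (1 / 2)) (hD x)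
    linarith [(abs_le.1 hx).2]
end

section
/- Let β>0 and let l_0(t) = (t,t), l_1(t) = (1−2t,t), l_2(t) = (t,1−2t) for t ∈ (0,1/2). Then for each i = 0,1,2 and every t ∈ (0,1/2), the map t ↦ F_β(l_i(t)) is differentiable with derivative (d/dt) F_β(l_i(t)) = (3/β)·(3t−1)·(f_0(t) − β). -/
/-- `f₀(t) = (2/(3(1−3t))) log((1−2t)/t)` for `t ≠ 1/3`, with `f₀(1/3) = 2`. -/
noncomputable def f0 (t : ℝ) : ℝ :=
  if t = 1 / 3 then 2 else 2 / (3 * (1 - 3 * t)) * Real.log ((1 - 2 * t) / t)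

lemma potPsi_norm_sq (x : ℝ × ℝ) :
    (potPsi x).1 ^ 2 + (potPsi x).2 ^ 2 =
      (2 * x.1 + x.2 - 1) ^ 2 - (2 * x.1 + x.2 - 1) * (x.1 + 2 * x.2 - 1)
        + (x.1 + 2 * x.2 - 1) ^ 2 := by
  have c1 : Real.cos (2 * Real.pi * (1 : ℕ) / 3) = -(1 / 2) := by
    rw [show 2 * Real.pi * ((1 : ℕ) : ℝ) / 3 = Real.pi - Real.pi / 3 by push_cast; ring,
      Real.cos_pi_sub, Real.cos_pi_div_three]
  have s1 : Real.sin (2 * Real.pi * (1 : ℕ) / 3) = √3 / 2 := by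
    rw [show 2 * Real.pi * ((1 : ℕ) : ℝ) / 3 = Real.pi - Real.pi / 3 by push_cast; ring,
      Real.sin_pi_sub, Real.sin_pi_div_three]
  have c2 : Real.cos (2 * Real.pi * (2 : ℕ) / 3) = -(1 / 2) := by
    rw [show 2 * Real.pi * ((2 : ℕ) : ℝ) / 3 = Real.pi / 3 + Real.pi by push_cast; ring,
      Real.cos_add_pi, Real.cos_pi_div_three]
  have s2 : Real.sin (2 * Real.pi * (2 : ℕ) / 3) = -(√3 / 2) := by
    rw [show 2 * Real.pi * ((2 : ℕ) : ℝ) / 3 = Real.pi / 3 + Real.pi by push_cast; ring,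
      Real.sin_add_pi, Real.sin_pi_div_three]
  have h3 : √3 ^ 2 = (3 : ℝ) := Real.sq_sqrt (by norm_num)
  simp only [potPsi, potV, c1, s1, c2, s2]
  linear_combination (x.1 - x.2) ^ 2 / 4 * h3

/-- The common restriction of `F_β` to the three lines. -/
noncomputable def potLine (β s : ℝ) : ℝ :=
  -(1 / 2) * (3 * s - 1) ^ 2
    + (1 / β) * ((1 - 2 * s) * Real.log (3 * (1 - 2 * s)) + 2 * (s * Real.log (3 * s)))

lemma potF_line_zero (β s : ℝ) : potF β (s, s) = potLine β s := by
  simp only [potF, potPsi_norm_sq, potS, potLine, show 1 - s - s = 1 - 2 * s by ring]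
  ring

lemma potF_line_one (β s : ℝ) : potF β (1 - 2 * s, s) = potLine β s := by
  simp only [potF, potPsi_norm_sq, potS, potLine, show 1 - (1 - 2 * s) - s = s by ring]
  ring

lemma potF_line_two (β s : ℝ) : potF β (s, 1 - 2 * s) = potLine β s := by
  simp only [potF, potPsi_norm_sq, potS, potLine, show 1 - s - (1 - 2 * s) = s by ring]
  ring

/-- The defining relation of `f₀`, cleared of its denominator, so that it also holds at `1/3`. -/
lemma mul_f0 (t : ℝ) : 3 * (3 * t - 1) * f0 t = -2 * Real.log ((1 - 2 * t) / t) := by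
  unfold f0
  split_ifs with h
  · subst h
    norm_num
  · have h' : 1 - 3 * t ≠ 0 := fun h0 => h (by linarith)
    field_simp
    ring

lemma hasDerivAt_mul_log {u : ℝ → ℝ} {u' t : ℝ} (hu : HasDerivAt u u' t) (h0 : u t ≠ 0) :
    HasDerivAt (fun s => u s * Real.log (3 * u s)) (u' * (Real.log (3 * u t) + 1)) t := by
  have h := hu.mul ((hu.const_mul 3).log (mul_ne_zero three_ne_zero h0))
  refine h.congr_deriv ?_
  field_simp

lemma hasDerivAt_potLine (β : ℝ) (hβ : 0 < β) (t : ℝ) (ht : t ∈ Set.Ioo (0 : ℝ) (1 / 2)) :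
    HasDerivAt (potLine β) (3 / β * (3 * t - 1) * (f0 t - β)) t := by
  obtain ⟨h0, h1⟩ := ht
  have hpos : 0 < 1 - 2 * t := by linarith
  have hu : HasDerivAt (fun s : ℝ => 1 - 2 * s) (-2) t := by
    simpa using ((hasDerivAt_id t).const_mul 2).const_sub 1
  have hw : HasDerivAt (fun s : ℝ => 3 * s - 1) 3 t := by
    simpa using ((hasDerivAt_id t).const_mul 3).sub_const 1
  have hS := (hasDerivAt_mul_log hu hpos.ne').add
    ((hasDerivAt_mul_log (hasDerivAt_id' t) h0.ne').const_mul 2)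
  have hF := ((hw.pow 2).const_mul (-(1 / 2))).add (hS.const_mul (1 / β))
  refine hF.congr_deriv ?_
  have hf := mul_f0 t
  rw [Real.log_div hpos.ne' h0.ne'] at hf
  rw [Real.log_mul three_ne_zero hpos.ne', Real.log_mul three_ne_zero h0.ne']
  field_simp
  norm_num
  linear_combination -2 * hf

/-- for each of the three lines `l₀(t) = (t,t)`, `l₁(t) = (1−2t,t)`,
`l₂(t) = (t,1−2t)`, the map `t ↦ F_β(l_i(t))` is differentiable on `(0,1/2)` with
derivative `(3/β)(3t−1)(f₀(t) − β)`. -/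
theorem potts_derivative_along_lines (β : ℝ) (hβ : 0 < β) (t : ℝ)
    (ht : t ∈ Set.Ioo (0 : ℝ) (1 / 2)) :
    HasDerivAt (fun s => potF β (s, s)) (3 / β * (3 * t - 1) * (f0 t - β)) t ∧
    HasDerivAt (fun s => potF β (1 - 2 * s, s)) (3 / β * (3 * t - 1) * (f0 t - β)) t ∧
    HasDerivAt (fun s => potF β (s, 1 - 2 * s)) (3 / β * (3 * t - 1) * (f0 t - β)) t := by
  simp only [potF_line_zero, potF_line_one, potF_line_two, and_self]
  exact hasDerivAt_potLine β hβ t ht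
end

section
/- Let m_0 ∈ (0,1/2) be a point at which f_0 attains its minimum over (0,1/2), and set β_3 = f_0(m_0). Then there exists β_2 ∈ (β_3, 2) such that for every β ∈ (β_3, 2) and every t ∈ (0,m_0) with f_0(t) = β: F_β(t,t) > 0 if β < β_2, F_β(t,t) = 0 if β = β_2, and F_β(t,t) < 0 if β > β_2. -/
/-- `G(t) = β F_β(t,t)` at `β = f₀(t)`, for `0 < t < 1/3`. -/
noncomputable def pottsG (t : ℝ) : ℝ :=
  (2 / 3 - t) * Real.log (1 - 2 * t) + (t + 1 / 3) * Real.log t + Real.log 3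

/-- The function `H` with `G' = -H` and `f₀' = 2H/(1-3t)²`. -/
noncomputable def pottsH (t : ℝ) : ℝ :=
  Real.log (1 - 2 * t) - Real.log t - (1 / 3 - t) / (t * (1 - 2 * t))

lemma hasDerivAt_log_one_sub {t : ℝ} (h1 : t < 1 / 2) :
    HasDerivAt (fun s : ℝ => Real.log (1 - 2 * s)) (-2 / (1 - 2 * t)) t := by
  have h : HasDerivAt (fun s : ℝ => 1 - 2 * s) (-2) t := by
    simpa using ((hasDerivAt_id t).const_mul 2).const_sub 1
  exact h.log (by linarith)

lemma hasDerivAt_pottsG {t : ℝ} (h0 : 0 < t) (h1 : t < 1 / 2) :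
    HasDerivAt pottsG (-pottsH t) t := by
  have ht : t ≠ 0 := h0.ne'
  have ht' : 1 - 2 * t ≠ 0 := by linarith
  have h := ((((hasDerivAt_id t).const_sub (2 / 3)).mul (hasDerivAt_log_one_sub h1)).add
    (((hasDerivAt_id t).add_const (1 / 3)).mul (Real.hasDerivAt_log ht))).add_const (Real.log 3)
  refine h.congr_deriv ?_
  simp only [pottsH, id]
  field_simp
  ring

lemma hasDerivAt_pottsH {t : ℝ} (h0 : 0 < t) (h1 : t < 1 / 2) :
    HasDerivAt pottsH ((1 / 3 - t) * (1 - 4 * t) / (t * (1 - 2 * t)) ^ 2) t := by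
  have ht : t ≠ 0 := h0.ne'
  have ht' : 1 - 2 * t ≠ 0 := by linarith
  have hq : HasDerivAt (fun s : ℝ => 1 - 2 * s) (-2) t := by
    simpa using ((hasDerivAt_id t).const_mul 2).const_sub 1
  have h := ((hasDerivAt_log_one_sub h1).sub (Real.hasDerivAt_log ht)).sub
    (((hasDerivAt_id t).const_sub (1 / 3)).div ((hasDerivAt_id t).mul hq) (mul_ne_zero ht ht'))
  refine h.congr_deriv ?_
  simp only [id, Pi.mul_apply]
  field_simp
  ring

lemma f0_eq {t : ℝ} (h0 : 0 < t) (h1 : t < 1 / 3) :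
    f0 t = 2 / (3 * (1 - 3 * t)) * (Real.log (1 - 2 * t) - Real.log t) := by
  rw [f0, if_neg h1.ne, Real.log_div (by linarith) h0.ne']

lemma hasDerivAt_f0 {t : ℝ} (h0 : 0 < t) (h1 : t < 1 / 3) :
    HasDerivAt f0 (2 * pottsH t / (1 - 3 * t) ^ 2) t := by
  have ht : t ≠ 0 := h0.ne'
  have ht' : 1 - 2 * t ≠ 0 := by linarith
  have ht3 : 1 - 3 * t ≠ 0 := by linarith
  have hq : HasDerivAt (fun s : ℝ => 3 * (1 - 3 * s)) (3 * (-3)) t := by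
    simpa using (((hasDerivAt_id t).const_mul 3).const_sub 1).const_mul 3
  have h := ((hasDerivAt_const t (2 : ℝ)).div hq (by simpa using ht3)).mul
    ((hasDerivAt_log_one_sub (by linarith)).sub (Real.hasDerivAt_log ht))
  have hev : f0 =ᶠ[nhds t]
      fun s => 2 / (3 * (1 - 3 * s)) * (Real.log (1 - 2 * s) - Real.log s) := by
    filter_upwards [Ioo_mem_nhds h0 h1] with s hs using f0_eq hs.1 hs.2
  refine (h.congr_of_eventuallyEq hev).congr_deriv ?_
  simp only [pottsH, Pi.div_apply, Pi.sub_apply]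
  have key : (1 - 2 * t) * (1 - 2 * t)⁻¹ = 1 := mul_inv_cancel₀ ht'
  field_simp
  linear_combination (2 - 6 * t) * key

lemma pottsH_strictMonoOn : StrictMonoOn pottsH (Set.Ioc 0 (1 / 4)) := by
  apply strictMonoOn_of_deriv_pos (convex_Ioc 0 (1 / 4))
  · intro t ht
    exact (hasDerivAt_pottsH ht.1 (by linarith [ht.2])).continuousAt.continuousWithinAt
  · intro t ht
    rw [interior_Ioc] at ht
    have h1 := ht.1
    have h2 := ht.2
    rw [(hasDerivAt_pottsH h1 (by linarith)).deriv]
    have : 0 < 1 - 2 * t := by linarith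
    have : 0 < 1 / 3 - t := by linarith
    have : 0 < 1 - 4 * t := by linarith
    positivity

lemma pottsH_pos {t : ℝ} (h0 : 1 / 4 ≤ t) (h1 : t < 1 / 3) : 0 < pottsH t := by
  have hanti : StrictAntiOn pottsH (Set.Icc (1 / 4) (1 / 3)) := by
    apply strictAntiOn_of_deriv_neg (convex_Icc (1 / 4) (1 / 3))
    · intro s hs
      exact (hasDerivAt_pottsH (by linarith [hs.1])
        (by linarith [hs.2])).continuousAt.continuousWithinAt
    · intro s hs
      rw [interior_Icc] at hs
      have hs1 := hs.1
      have hs2 := hs.2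
      rw [(hasDerivAt_pottsH (by linarith) (by linarith)).deriv]
      have : 0 < 1 - 2 * s := by linarith
      have : 0 < s := by linarith
      exact div_neg_of_neg_of_pos (mul_neg_of_pos_of_neg (by linarith) (by linarith))
        (by positivity)
  have h := hanti ⟨h0, h1.le⟩ (Set.right_mem_Icc.2 (by norm_num)) h1
  have h3 : pottsH (1 / 3) = 0 := by norm_num [pottsH]
  linarith

lemma two_le_f0 {t : ℝ} (h0 : 1 / 3 ≤ t) (h1 : t < 1 / 2) : 2 ≤ f0 t := by
  rcases h0.eq_or_lt with h | h
  · rw [f0, if_pos h.symm]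
  · rw [f0, if_neg h.ne']
    have hq : 0 < 1 - 2 * t := by linarith
    have hd : 0 < 3 * t - 1 := by linarith
    have ht : 0 < t := by linarith
    -- the Padé bound `2x/(x+2) ≤ log(1+x)` at `1 + x = t/(1-2t)`
    have hl := Real.le_log_one_add_of_nonneg (x := (3 * t - 1) / (1 - 2 * t)) (by positivity)
    have e1 : 1 + (3 * t - 1) / (1 - 2 * t) = ((1 - 2 * t) / t)⁻¹ := by
      rw [inv_div, eq_div_iff hq.ne', add_mul, div_mul_cancel₀ _ hq.ne']
      ring
    have hd' : 0 < 1 - t := by linarith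
    have e2 : 2 * ((3 * t - 1) / (1 - 2 * t)) / ((3 * t - 1) / (1 - 2 * t) + 2)
        = 2 * (3 * t - 1) / (1 - t) := by
      have e3 : (3 * t - 1) / (1 - 2 * t) + 2 = (1 - t) / (1 - 2 * t) := by
        rw [eq_div_iff hq.ne', add_mul, div_mul_cancel₀ _ hq.ne']
        ring
      rw [e3]
      field_simp
    rw [e1, e2, Real.log_inv] at hl
    have hl2 : 3 * (3 * t - 1) ≤ -Real.log ((1 - 2 * t) / t) := by
      refine le_trans ?_ hl
      rw [le_div_iff₀ hd']
      nlinarith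
    have e4 : 2 / (3 * (1 - 3 * t)) * Real.log ((1 - 2 * t) / t)
        = 2 * (-Real.log ((1 - 2 * t) / t)) / (3 * (3 * t - 1)) := by
      rw [show 1 - 3 * t = -(3 * t - 1) by ring]
      field_simp
    rw [e4, le_div_iff₀ (by positivity)]
    linarith

lemma log_four_eq : Real.log 4 = 2 * Real.log 2 := by
  rw [show (4 : ℝ) = 2 ^ 2 by norm_num, Real.log_pow]
  norm_num

lemma f0_sixth_lt_two : f0 (1 / 6) < 2 := by
  rw [f0, if_neg (by norm_num)]
  norm_num
  rw [log_four_eq]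
  linarith [Real.log_two_lt_d9]

lemma pottsH_sixth_neg : pottsH (1 / 6) < 0 := by
  have h : Real.log (1 - 2 * (1 / 6)) - Real.log (1 / 6) = Real.log 4 := by
    rw [← Real.log_div (by norm_num) (by norm_num)]
    norm_num
  rw [pottsH, h, log_four_eq]
  norm_num
  linarith [Real.log_two_lt_d9]

lemma pottsG_sixth : pottsG (1 / 6) = 0 := by
  have h : Real.log (1 - 2 * (1 / 6)) + Real.log (1 / 6) + 2 * Real.log 3 = 0 := by
    have h9 : 2 * Real.log 3 = Real.log (3 ^ 2) := by
      rw [Real.log_pow]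
      norm_num
    rw [h9, ← Real.log_mul (by norm_num) (by norm_num), ← Real.log_mul (by norm_num) (by norm_num)]
    norm_num
  rw [pottsG]
  linarith

lemma potPsi_diag (t : ℝ) :
    (potPsi (t, t)).1 ^ 2 + (potPsi (t, t)).2 ^ 2 = (1 - 3 * t) ^ 2 := by
  have c1 : Real.cos (2 * Real.pi * (1 : ℕ) / 3) = -(1 / 2) := by
    rw [show 2 * Real.pi * (1 : ℕ) / 3 = Real.pi - Real.pi / 3 by push_cast; ring,
      Real.cos_pi_sub, Real.cos_pi_div_three]
  have c2 : Real.cos (2 * Real.pi * (2 : ℕ) / 3) = -(1 / 2) := by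
    rw [show 2 * Real.pi * (2 : ℕ) / 3 = Real.pi / 3 + Real.pi by push_cast; ring,
      Real.cos_add_pi, Real.cos_pi_div_three]
  have s1 : Real.sin (2 * Real.pi * (1 : ℕ) / 3) = Real.sin (Real.pi / 3) := by
    rw [show 2 * Real.pi * (1 : ℕ) / 3 = Real.pi - Real.pi / 3 by push_cast; ring,
      Real.sin_pi_sub]
  have s2 : Real.sin (2 * Real.pi * (2 : ℕ) / 3) = -Real.sin (Real.pi / 3) := by
    rw [show 2 * Real.pi * (2 : ℕ) / 3 = Real.pi / 3 + Real.pi by push_cast; ring,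
      Real.sin_add_pi]
  simp only [potPsi, potV, c1, c2, s1, s2]
  ring

lemma f0_pos {t : ℝ} (h0 : 0 < t) (h1 : t < 1 / 3) : 0 < f0 t := by
  rw [f0_eq h0 h1]
  have h : Real.log t < Real.log (1 - 2 * t) := Real.log_lt_log h0 (by linarith)
  have h3 : 0 < 1 - 3 * t := by linarith
  exact mul_pos (by positivity) (by linarith)

lemma potF_diag {t : ℝ} (h0 : 0 < t) (h1 : t < 1 / 3) :
    potF (f0 t) (t, t) = pottsG t / f0 t := by
  have hpos := f0_pos h0 h1
  rw [eq_div_iff hpos.ne', potF, potPsi_diag]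
  have h3 : 1 - 3 * t ≠ 0 := by linarith
  have hF : (1 - 3 * t) ^ 2 * f0 t
      = 2 / 3 * (1 - 3 * t) * (Real.log (1 - 2 * t) - Real.log t) := by
    rw [f0_eq h0 h1]
    field_simp
  have hS : potS (t, t)
      = (1 - 2 * t) * Real.log (1 - 2 * t) + 2 * t * Real.log t + Real.log 3 := by
    have h2 : 1 - 2 * t ≠ 0 := by linarith
    simp only [potS]
    rw [show 1 - t - t = 1 - 2 * t by ring, Real.log_mul (by norm_num) h2,
      Real.log_mul (by norm_num) h0.ne']
    ring
  have hm : 1 / f0 t * potS (t, t) * f0 t = potS (t, t) := by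
    field_simp
  rw [add_mul, hm, hS, pottsG]
  linarith

/-- with `β₃ = f₀(m₀)` where `m₀` minimizes `f₀` on `(0,1/2)`, there exists
`β₂ ∈ (β₃,2)` such that for every `β ∈ (β₃,2)` and every `t ∈ (0,m₀)` with `f₀(t) = β`:
`F_β(t,t) > 0` if `β < β₂`, `F_β(t,t) = 0` if `β = β₂`, and `F_β(t,t) < 0` if `β > β₂`. -/
theorem potts_exists_critical_beta2 (m0 : ℝ)
    (hm : m0 ∈ Set.Ioo (0 : ℝ) (1 / 2))
    (hmin : ∀ s ∈ Set.Ioo (0 : ℝ) (1 / 2), f0 m0 ≤ f0 s) :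
    ∃ β2 : ℝ, f0 m0 < β2 ∧ β2 < 2 ∧
      ∀ β : ℝ, f0 m0 < β → β < 2 →
        ∀ t ∈ Set.Ioo (0 : ℝ) m0, f0 t = β →
          (β < β2 → 0 < potF β (t, t)) ∧
          (β = β2 → potF β (t, t) = 0) ∧
          (β2 < β → potF β (t, t) < 0) := by
  have h16 : (1 / 6 : ℝ) ∈ Set.Ioo (0 : ℝ) (1 / 2) := by norm_num
  have hm3 : m0 < 1 / 3 := by
    by_contra! h
    linarith [two_le_f0 h hm.2, hmin _ h16, f0_sixth_lt_two]
  have hHm : pottsH m0 = 0 := by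
    have hloc : IsLocalMin f0 m0 := by
      filter_upwards [Ioo_mem_nhds hm.1 hm.2] with s hs using hmin s hs
    have h := hloc.hasDerivAt_eq_zero (hasDerivAt_f0 hm.1 hm3)
    have h3 : 1 - 3 * m0 ≠ 0 := by linarith
    simpa [h3] using h
  have hm4 : m0 < 1 / 4 := by
    by_contra! h
    exact (pottsH_pos h hm3).ne' hHm
  have hm6 : 1 / 6 < m0 := by
    by_contra! h
    have := pottsH_strictMonoOn.monotoneOn ⟨hm.1, hm4.le⟩ ⟨by norm_num, by norm_num⟩ h
    linarith [pottsH_sixth_neg]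
  have hneg : ∀ t ∈ Set.Ioo 0 m0, pottsH t < 0 := fun t ht => by
    have := pottsH_strictMonoOn ⟨ht.1, by linarith [ht.2]⟩ ⟨hm.1, hm4.le⟩ ht.2
    linarith
  have hf : StrictAntiOn f0 (Set.Ioc 0 m0) := by
    apply strictAntiOn_of_deriv_neg (convex_Ioc 0 m0)
    · intro t ht
      exact (hasDerivAt_f0 ht.1 (by linarith [ht.2])).continuousAt.continuousWithinAt
    · intro t ht
      rw [interior_Ioc] at ht
      have h3 : 0 < 1 - 3 * t := by linarith [ht.2]
      rw [(hasDerivAt_f0 ht.1 (by linarith [ht.2])).deriv]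
      exact div_neg_of_neg_of_pos (by linarith [hneg t ht]) (by positivity)
  have hG : StrictMonoOn pottsG (Set.Ioc 0 m0) := by
    apply strictMonoOn_of_deriv_pos (convex_Ioc 0 m0)
    · intro t ht
      exact (hasDerivAt_pottsG ht.1 (by linarith [ht.2])).continuousAt.continuousWithinAt
    · intro t ht
      rw [interior_Ioc] at ht
      rw [(hasDerivAt_pottsG ht.1 (by linarith [ht.2])).deriv]
      linarith [hneg t ht]
  have h6 : (1 / 6 : ℝ) ∈ Set.Ioc 0 m0 := ⟨by norm_num, hm6.le⟩
  refine ⟨f0 (1 / 6), hf h6 ⟨hm.1, le_rfl⟩ hm6, f0_sixth_lt_two, ?_⟩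
  rintro β - - t ht rfl
  have ht' : t ∈ Set.Ioc 0 m0 := ⟨ht.1, ht.2.le⟩
  have ht3 : t < 1 / 3 := ht.2.trans hm3
  have hpos := f0_pos ht.1 ht3
  rw [potF_diag ht.1 ht3]
  refine ⟨fun h => ?_, fun h => ?_, fun h => ?_⟩
  · have := hG h6 ht' ((hf.lt_iff_gt ht' h6).1 h)
    rw [pottsG_sixth] at this
    exact div_pos this hpos
  · rw [hf.injOn ht' h6 h, pottsG_sixth, zero_div]
  · have := hG ht' h6 ((hf.lt_iff_gt h6 ht').1 h)
    rw [pottsG_sixth] at this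
    exact div_neg_of_neg_of_pos this hpos
end
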